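/- arXiv:1212.5158 — 2 statements merged into one kernel-verified Lean document; each statement's English description precedes it below -/
import Mathlib

section
/- Let γ be dense and let Q be a nonzero proper Poisson prime ideal of A_γ. Then Q is a minimal prime ideal over the extended ideal (Q ∩ C_γ)·A_γ. -/
/- STATEMENT 10: Let γ be dense and Q a nonzero proper Poisson prime ideal of A_γ.
Then Q is a minimal prime ideal over the extended ideal (Q ∩ C_γ)·A_γ. -/

set_option synthInstance.maxHeartbeats 1000000
set_option maxHeartbeats 1000000

noncomputable section
open MvPolynomial

/-- The polynomial algebra `A = ℂ[x_1,…,x_{m+2}]`. -/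
abbrev PA (m : ℕ) : Type := MvPolynomial (Fin (m + 2)) ℂ

/-- The rational function field `B = ℂ(x_1,…,x_{m+2})`. -/
abbrev FB (m : ℕ) : Type := FractionRing (PA m)

/-- `D` is the family of partial derivatives `∂/∂x_j` extended to the rational function
field. -/
def IsPartialDerivs {m : ℕ} (D : Fin (m + 2) → Derivation ℂ (FB m) (FB m)) : Prop :=
  ∀ (j : Fin (m + 2)) (p : PA m),
    D j (algebraMap (PA m) (FB m) p) = algebraMap (PA m) (FB m) (pderiv j p)

/-- The Jacobian determinant `Jac(b_1,…,b_n) = det(∂_j b_i)`. -/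
def Jac {m : ℕ} (D : Fin (m + 2) → Derivation ℂ (FB m) (FB m))
    (b : Fin (m + 2) → FB m) : FB m :=
  Matrix.det (Matrix.of fun i j => D j (b i))

/-- The Poisson bracket `{f,g} = (t_1⋯t_m)²·Jac(f,g,s_1/t_1,…,s_m/t_m)` on `B`. -/
def brB {m : ℕ} (D : Fin (m + 2) → Derivation ℂ (FB m) (FB m))
    (s t : Fin m → PA m) (f g : FB m) : FB m :=
  algebraMap (PA m) (FB m) ((∏ i, t i) ^ 2) *
    Jac D (Fin.cons f (Fin.cons g
      (fun i => algebraMap (PA m) (FB m) (s i) / algebraMap (PA m) (FB m) (t i))))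

/-- The set `S_γ = {s_i : γ_i = 1} ∪ {t_i : δ_i = 1}`. -/
def Sgam {m : ℕ} (s t : Fin m → PA m) (γ : Fin m → Bool × Bool) : Set (PA m) :=
  {x | ∃ i, (γ i).1 = true ∧ x = s i} ∪ {x | ∃ i, (γ i).2 = true ∧ x = t i}

/-- The localization `A_γ = M_γ⁻¹A`, viewed as a subring of `B`: the subalgebra of `B`
generated by (the image of) `A` together with the inverses of the elements of `S_γ`. -/
def Agam {m : ℕ} (s t : Fin m → PA m) (γ : Fin m → Bool × Bool) : Subalgebra ℂ (FB m) :=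
  Algebra.adjoin ℂ
    (Set.range (algebraMap (PA m) (FB m)) ∪
      ((fun x => (algebraMap (PA m) (FB m) x)⁻¹) '' Sgam s t γ))

/-- `v_i = s_i/t_i` if `δ_i = 1` and `v_i = t_i/s_i` otherwise. -/
def vgam {m : ℕ} (s t : Fin m → PA m) (γ : Fin m → Bool × Bool) (i : Fin m) : FB m :=
  if (γ i).2 then algebraMap (PA m) (FB m) (s i) / algebraMap (PA m) (FB m) (t i)
  else algebraMap (PA m) (FB m) (t i) / algebraMap (PA m) (FB m) (s i)

/-- `C_γ`, the ℂ-subalgebra generated by `v_1,…,v_m`. -/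
def Cgam {m : ℕ} (s t : Fin m → PA m) (γ : Fin m → Bool × Bool) : Subalgebra ℂ (FB m) :=
  Algebra.adjoin ℂ (Set.range (vgam s t γ))

/-!
The bracket is a multiple of `{f,g} = Jac(f,g,v_1,…,v_m)`, and some `f, g` have `w = {f,g} ∉ Q`.
Over `C = C_γ`, Cramer's rule for the Jacobian matrix reads `{f,g} dr = {r,g} df + {f,r} dg` in
`Ω[R⁄C]`, `R = A_γ`. For a prime `P ≤ Q` it follows that `R ⧸ P` is algebraic over the image of
`C[f,g]`, so if `P ≠ Q` then some polynomial expression `F(f,g)` with coefficients in `C` lies in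
`Q` but not in `P`. The `C`-linear derivations `{·,g}` and `{f,·}` preserve `Q` and act on `C[f,g]`
as `w` times the two partial derivatives, so all the coefficients of `F` lie in `Q`. If `P` contains
`Q ∩ C`, then `F(f,g) ∈ P`, a contradiction.
-/

section PartialDerivatives

variable {C σ : Type*} [CommRing C]

theorem C_coeff_mem_of_forall_C_coeff_pderiv_mem [Algebra ℚ C] {J : Ideal (MvPolynomial σ C)}
    {F : MvPolynomial σ C} (hF : F ∈ J) (hdF : ∀ i k, MvPolynomial.C (coeff k (pderiv i F)) ∈ J)
    (k : σ →₀ ℕ) : MvPolynomial.C (coeff k F) ∈ J := by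
  classical
  have coeff_mem_of_ne_zero (l : σ →₀ ℕ) (hl : l ≠ 0) : MvPolynomial.C (coeff l F) ∈ J := by
    obtain ⟨i, hi⟩ := Finsupp.ne_iff.mp hl
    have hle : Finsupp.single i 1 ≤ l :=
      Finsupp.single_le_iff.mpr (Nat.one_le_iff_ne_zero.mpr hi)
    have hunit (N : ℕ) : IsUnit (N + 1 : C) := by
      simpa using (IsUnit.mk0 (N + 1 : ℚ) (Nat.cast_add_one_ne_zero N)).map (algebraMap ℚ C)
    have := hdF i (l - Finsupp.single i 1)
    rw [coeff_pderiv, tsub_add_cancel_of_le hle, MvPolynomial.C_mul] at this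
    exact (Ideal.mul_unit_mem_iff_mem J ((hunit _).map _)).mp this
  rcases ne_or_eq k 0 with hk | rfl
  · exact coeff_mem_of_ne_zero k hk
  have hrest : F - MvPolynomial.C (coeff 0 F) ∈ J := by
    rw [as_sum (F - _)]
    refine J.sum_mem fun l _ => ?_
    rw [← mul_one (coeff l _), ← C_mul_monomial]
    refine J.mul_mem_right _ ?_
    rcases eq_or_ne l 0 with rfl | hl
    · simp
    · simpa [coeff_C, hl.symm] using coeff_mem_of_ne_zero l hl
  simpa using J.sub_mem hF hrest

theorem C_coeff_mem_of_pderiv_mem [Algebra ℚ C] {J : Ideal (MvPolynomial σ C)}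
    (hJ : ∀ i, ∀ F ∈ J, pderiv i F ∈ J) {F : MvPolynomial σ C} (hF : F ∈ J) (k : σ →₀ ℕ) :
    MvPolynomial.C (coeff k F) ∈ J := by
  suffices h : ∀ N : ℕ, ∀ F ∈ J, (∀ l : σ →₀ ℕ, N ≤ l.degree → coeff l F = 0) →
      ∀ l, MvPolynomial.C (coeff l F) ∈ J from
    h (F.totalDegree + 1) F hF (fun l hl => coeff_eq_zero_of_totalDegree_lt hl) k
  intro N
  induction N with
  | zero =>
    intro F _ hdeg l
    simp [hdeg l (Nat.zero_le _)]
  | succ N ih =>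
    intro F hF hdeg
    refine C_coeff_mem_of_forall_C_coeff_pderiv_mem hF fun i =>
      ih (pderiv i F) (hJ i F hF) fun l hl => ?_
    rw [coeff_pderiv, hdeg _ (by simpa using hl), zero_mul]

variable {R : Type*} [CommRing R] [Algebra C R]

theorem derivation_aeval_eq_mul_aeval_pderiv [DecidableEq σ] (d : Derivation C R R) {x : σ → R}
    {w : R} {i : σ} (hd : ∀ j, d (x j) = (Pi.single i w : σ → R) j) (F : MvPolynomial σ C) :
    d (aeval x F) = w * aeval x (pderiv i F) := by
  induction F using MvPolynomial.induction_on with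
  | C c => simp
  | add F G hF hG => simp only [map_add, hF, hG, mul_add]
  | mul_X F j hF =>
    simp only [map_mul, aeval_X, Derivation.leibniz, hF, hd, pderiv_X, map_add, smul_eq_mul]
    rcases eq_or_ne j i with rfl | hj
    · simp only [Pi.single_eq_same, map_one]
      ring
    · simp only [Pi.single_eq_of_ne hj, map_zero]
      ring

theorem algebraMap_coeff_mem_of_aeval_mem [Algebra ℚ C] [DecidableEq σ]
    {δ : σ → Derivation C R R} {x : σ → R} {w : R}
    (hδx : ∀ i j, δ i (x j) = (Pi.single i w : σ → R) j) {Q : Ideal R} [Q.IsPrime] (hwQ : w ∉ Q)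
    (hδQ : ∀ i, ∀ q ∈ Q, δ i q ∈ Q) {F : MvPolynomial σ C} (hF : aeval x F ∈ Q) (k : σ →₀ ℕ) :
    algebraMap C R (coeff k F) ∈ Q := by
  have hpderiv : ∀ i, ∀ G ∈ Q.comap (aeval (R := C) x), pderiv i G ∈ Q.comap (aeval x) := by
    intro i G hG
    have := hδQ i _ hG
    rw [derivation_aeval_eq_mul_aeval_pderiv (δ i) (hδx i)] at this
    exact (Ideal.IsPrime.mem_or_mem ‹_› this).resolve_left hwQ
  simpa using C_coeff_mem_of_pderiv_mem hpderiv hF k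

end PartialDerivatives

section Algebraicity

open KaehlerDifferential

theorem subsingleton_kaehlerDifferential_of_D_eq_zero {A B : Type*} [CommRing A] [CommRing B]
    [Algebra A B] (h : ∀ b, D A B b = 0) : Subsingleton Ω[B⁄A] := by
  rw [← Submodule.subsingleton_iff B, ← subsingleton_iff_bot_eq_top, ← span_range_derivation]
  exact (Submodule.span_eq_bot.mpr (Set.forall_mem_range.mpr h)).symm

theorem isAlgebraic_of_smul_D_eq_zero {T S : Type*} [CommRing T] [CommRing S] [IsDomain T]
    [IsDomain S] [Algebra T S] [FaithfulSMul T S] [Algebra.EssFiniteType T S] {w : S} (hw : w ≠ 0)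
    (h : ∀ a, w • D T S a = 0) : Algebra.IsAlgebraic T S := by
  let K := FractionRing T
  let L := FractionRing S
  let _ : Algebra K L := FractionRing.liftAlgebra T L
  have : IsScalarTower T K L := FractionRing.isScalarTower_liftAlgebra T L
  have D_algebraMap (a : S) : D T L (algebraMap S L a) = 0 := by
    have hwD : algebraMap S L w • D T L (algebraMap S L a) = 0 := by
      rw [algebraMap_smul, ← map_D T T S L a, ← map_smul, h, map_zero]
    refine (smul_eq_zero.mp hwD).resolve_left ?_
    rwa [FaithfulSMul.algebraMap_eq_zero_iff]
  have D_eq_zero (z : L) : D T L z = 0 := by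
    obtain ⟨a, b, -, rfl⟩ := IsFractionRing.div_surjective (A := S) z
    simp [Derivation.leibniz_div, D_algebraMap]
  have : Algebra.FormallyUnramified T L :=
    ⟨subsingleton_kaehlerDifferential_of_D_eq_zero D_eq_zero⟩
  have : Algebra.FormallyUnramified K L := .of_restrictScalars T K L
  have : Algebra.EssFiniteType S L := .of_isLocalization L (nonZeroDivisors S)
  have : Algebra.EssFiniteType T L := .comp T S L
  have : Algebra.EssFiniteType K L := .of_comp T K L
  have : Algebra.IsSeparable K L := Algebra.FormallyUnramified.isSeparable K L
  have : Algebra.IsAlgebraic T L :=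
    (IsFractionRing.comap_isAlgebraic_iff (K := K)).mpr inferInstance
  exact .of_injective (IsScalarTower.toAlgHom T S L) (FaithfulSMul.algebraMap_injective S L)

variable {C R σ : Type*} [CommRing C] [CommRing R] [Algebra C R] [Algebra.EssFiniteType C R]

theorem isAlgebraic_adjoin_mk_of_smul_D_mem_span {x : σ → R} {w : R}
    (hw : ∀ r, w • D C R r ∈ Submodule.span R (Set.range fun i => D C R (x i)))
    {P : Ideal R} [P.IsPrime] (hwP : w ∉ P) :
    Algebra.IsAlgebraic (Algebra.adjoin C (Set.range fun i => Ideal.Quotient.mk P (x i)))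
      (R ⧸ P) := by
  set T := Algebra.adjoin C (Set.range fun i => Ideal.Quotient.mk P (x i))
  have : Algebra.EssFiniteType T (R ⧸ P) := .of_comp C T (R ⧸ P)
  refine isAlgebraic_of_smul_D_eq_zero (w := Ideal.Quotient.mk P w)
    (mt Ideal.Quotient.eq_zero_iff_mem.mp hwP) fun a => ?_
  obtain ⟨r, rfl⟩ := Ideal.Quotient.mk_surjective a
  let φ : Ω[R⁄C] →ₗ[R] Ω[(R ⧸ P)⁄T] := map C T R (R ⧸ P)
  have hφ (a : R) : φ (D C R a) = D T (R ⧸ P) (Ideal.Quotient.mk P a) := map_D C T R (R ⧸ P) a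
  have span_le_ker : Submodule.span R (Set.range fun i => D C R (x i)) ≤ LinearMap.ker φ := by
    rw [Submodule.span_le]
    rintro _ ⟨i, rfl⟩
    have hxT : Ideal.Quotient.mk P (x i) ∈ T := Algebra.subset_adjoin ⟨i, rfl⟩
    exact (hφ (x i)).trans ((D T (R ⧸ P)).map_algebraMap ⟨_, hxT⟩)
  have := span_le_ker (hw r)
  rw [LinearMap.mem_ker, map_smul, hφ] at this
  rwa [← Ideal.Quotient.algebraMap_eq, algebraMap_smul]

theorem exists_aeval_mem_notMem_of_lt {x : σ → R} {w : R}
    (hw : ∀ r, w • D C R r ∈ Submodule.span R (Set.range fun i => D C R (x i)))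
    {P Q : Ideal R} [P.IsPrime] (hwP : w ∉ P) (hPQ : P < Q) :
    ∃ F : MvPolynomial σ C, aeval x F ∈ Q ∧ aeval x F ∉ P := by
  obtain ⟨q, hqQ, hqP⟩ := SetLike.exists_of_lt hPQ
  have := isAlgebraic_adjoin_mk_of_smul_D_mem_span hw hwP
  have hne := Ideal.comap_ne_bot_of_algebraic_mem (mt Ideal.Quotient.eq_zero_iff_mem.mp hqP)
    (Ideal.mem_map_of_mem _ hqQ) (Algebra.IsAlgebraic.isAlgebraic
      (R := Algebra.adjoin C (Set.range fun i => Ideal.Quotient.mk P (x i))) _)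
  obtain ⟨⟨y, hy⟩, hyQ, hy0⟩ := Submodule.exists_mem_ne_zero_of_ne_bot hne
  rw [Algebra.adjoin_range_eq_range_aeval] at hy
  obtain ⟨F, rfl⟩ := hy
  have hmk : aeval (fun i => Ideal.Quotient.mk P (x i)) F = Ideal.Quotient.mk P (aeval x F) :=
    (comp_aeval_apply x (Ideal.Quotient.mkₐ C P) F).symm
  refine ⟨F, ?_, fun hF => hy0 (Subtype.ext ?_)⟩
  · rw [← Ideal.mem_quotient_iff_mem hPQ.le, ← hmk]
    exact hyQ
  · exact hmk.trans (Ideal.Quotient.eq_zero_iff_mem.mpr hF)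

theorem mem_minimalPrimes_map_comap_of_derivations [Algebra ℚ C] [DecidableEq σ]
    {δ : σ → Derivation C R R} {x : σ → R} {w : R}
    (hδx : ∀ i j, δ i (x j) = (Pi.single i w : σ → R) j)
    (hw : ∀ r, w • D C R r ∈ Submodule.span R (Set.range fun i => D C R (x i)))
    {Q : Ideal R} [hQ : Q.IsPrime] (hwQ : w ∉ Q) (hδQ : ∀ i, ∀ q ∈ Q, δ i q ∈ Q) :
    Q ∈ ((Q.comap (algebraMap C R)).map (algebraMap C R)).minimalPrimes := by
  refine ⟨⟨hQ, Ideal.map_comap_le⟩, fun P ⟨_, hle⟩ hPQ => ?_⟩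
  by_contra hQP
  obtain ⟨F, hFQ, hFP⟩ := exists_aeval_mem_notMem_of_lt hw (mt (@hPQ w) hwQ)
    (lt_of_le_not_ge hPQ hQP)
  have hcoeff (k : σ →₀ ℕ) : algebraMap C R (coeff k F) ∈ P :=
    Ideal.map_le_iff_le_comap.mp hle (algebraMap_coeff_mem_of_aeval_mem hδx hwQ hδQ hFQ k)
  refine hFP ?_
  rw [aeval_def, eval₂_eq]
  exact P.sum_mem fun k _ => P.mul_mem_right _ (hcoeff k)

end Algebraicity

section Jacobian

open scoped Matrix

variable {k R M n : Type*} [CommRing k] [CommRing R] [Algebra k R] [AddCommGroup M] [Module k M]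
  [Module R M]

/-- A derivation that vanishes on the image of an algebra `C`, as a derivation over `C`. -/
def derivationOver {C : Type*} [CommRing C] [Algebra C R] (d : Derivation k R R)
    (hd : ∀ c, d (algebraMap C R c) = 0) : Derivation C R R :=
  Derivation.mk'
    { toFun := d
      map_add' := map_add d
      map_smul' := fun c r => by simp [Algebra.smul_def, hd] }
    d.leibniz

/-- The Jacobian matrix `(D_j b_i)` of the family `b`, with rows indexed by `b`. -/
def jacobianMatrix (D : n → Derivation k R R) (b : n → R) : Matrix n n R :=
  Matrix.of fun i j => D j (b i)

variable [Fintype n]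

/-- The functions `x_j` are coordinates with respect to which the derivations `D_j` are the partial
derivatives, in the sense that `df = ∑_j D_j f dx_j` for all `f`. -/
def IsCoordinateSystem (D : n → Derivation k R R) (x : n → R) : Prop :=
  ∀ f, KaehlerDifferential.D k R f = ∑ j, D j f • KaehlerDifferential.D k R (x j)

theorem IsCoordinateSystem.derivation_apply [IsScalarTower k R M] {D : n → Derivation k R R}
    {x : n → R} (hD : IsCoordinateSystem D x) (d : Derivation k R M) (f : R) :
    d f = ∑ j, D j f • d (x j) := by
  simpa only [map_sum, map_smul, Derivation.liftKaehlerDifferential_comp_D] using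
    congrArg d.liftKaehlerDifferential (hD f)

theorem isCoordinateSystem_of_adjoin_eq_top [DecidableEq n] {D : n → Derivation k R R} {x : n → R}
    (hDx : ∀ i j, D i (x j) = (Pi.single i 1 : n → R) j) {t : Set R}
    (ht : ∀ a ∈ t, ∃ b ∈ Algebra.adjoin k (Set.range x), a * b = 1)
    (htop : Algebra.adjoin k (Set.range x ∪ t) = ⊤) : IsCoordinateSystem D x := by
  let d := KaehlerDifferential.D k R
  let d' : Derivation k R (Ω[R⁄k]) := ∑ j, (LinearMap.toSpanSingleton R _ (d (x j))).compDer (D j)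
  have d'_apply (f : R) : d' f = ∑ j, D j f • d (x j) := by
    simp only [d', ← Derivation.coeFnAddMonoidHom_apply, map_sum, Finset.sum_apply]
    rfl
  have eqOn_x : Set.EqOn d d' (Set.range x) := by
    rintro _ ⟨j, rfl⟩
    simp [d'_apply, hDx, Pi.single_apply, ite_smul]
  have eqOn_t : Set.EqOn d d' t := by
    intro a ha
    obtain ⟨b, hb, hab⟩ := ht a ha
    rw [Derivation.leibniz_of_mul_eq_one _ hab, Derivation.leibniz_of_mul_eq_one _ hab,
      Derivation.eqOn_adjoin eqOn_x hb]
  intro f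
  rw [← d'_apply]
  exact congrArg (· f) (Derivation.ext_of_adjoin_eq_top _ htop (eqOn_x.union eqOn_t))

variable [DecidableEq n]

/-- The derivation sending `r` to the Jacobian determinant of `b` with `b i` replaced by `r`. -/
def jacobianDerivation (D : n → Derivation k R R) (b : n → R) (i : n) : Derivation k R R :=
  Derivation.mk'
    (LinearMap.proj i ∘ₗ (Matrix.cramer (jacobianMatrix D b)ᵀ).restrictScalars k ∘ₗ
      LinearMap.pi fun j => (D j : R →ₗ[k] R)) fun r r' => by
    have hleibniz : (fun j => D j (r * r')) = r • (fun j => D j r') + r' • fun j => D j r := by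
      ext j
      simp
    change Matrix.cramer (jacobianMatrix D b)ᵀ (fun j => D j (r * r')) i = _
    rw [hleibniz, map_add, map_smul, map_smul]
    rfl

theorem jacobianDerivation_apply (D : n → Derivation k R R) (b : n → R) (i : n) (r : R) :
    jacobianDerivation D b i r = (jacobianMatrix D (Function.update b i r)).det := by
  refine (Matrix.cramer_transpose_apply _ _ _).trans (congrArg Matrix.det ?_)
  ext l j
  rcases eq_or_ne l i with rfl | hl
  · simp [jacobianMatrix]
  · simp [jacobianMatrix, hl]

theorem jacobianDerivation_apply_self (D : n → Derivation k R R) (b : n → R) (i j : n) :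
    jacobianDerivation D b i (b j) = (Pi.single i (jacobianMatrix D b).det : n → R) j :=
  (congrFun (Matrix.cramer_transpose_row_self (jacobianMatrix D b) j) i).trans
    (Pi.single_comm _ _ _)

theorem det_jacobianMatrix_smul_derivation [IsScalarTower k R M] {D : n → Derivation k R R}
    {x : n → R} (hD : IsCoordinateSystem D x) (b : n → R) (d : Derivation k R M) (r : R) :
    (jacobianMatrix D b).det • d r = ∑ i, jacobianDerivation D b i r • d (b i) := by
  have hcramer (j : n) : ∑ i, jacobianDerivation D b i r * D j (b i) =
      (jacobianMatrix D b).det * D j r := by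
    have := congrFun (Matrix.mulVec_cramer (jacobianMatrix D b)ᵀ fun j => D j r) j
    rw [Matrix.det_transpose] at this
    exact (Finset.sum_congr rfl fun i _ => mul_comm _ _).trans this
  calc (jacobianMatrix D b).det • d r
      = ∑ j, ((jacobianMatrix D b).det * D j r) • d (x j) := by
        simp only [hD.derivation_apply d r, Finset.smul_sum, mul_smul]
    _ = ∑ j, ∑ i, (jacobianDerivation D b i r * D j (b i)) • d (x j) := by
        simp only [← hcramer, Finset.sum_smul]
    _ = ∑ i, jacobianDerivation D b i r • d (b i) := by
        rw [Finset.sum_comm]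
        simp only [hD.derivation_apply d (b _), Finset.smul_sum, mul_smul]

theorem prod_mul_det_jacobianMatrix_congr {D : n → Derivation k R R} {b b' c c' : n → R}
    (h : ∀ i j, c i * D j (b i) = c' i * D j (b' i)) :
    (∏ i, c i) * (jacobianMatrix D b).det = (∏ i, c' i) * (jacobianMatrix D b').det := by
  rw [← Matrix.det_mul_column, ← Matrix.det_mul_column]
  exact congrArg Matrix.det (Matrix.ext h)

theorem mem_minimalPrimes_map_comap_of_jacobian {C : Type*} [CommRing C] [Algebra C R]
    [Algebra ℚ C] [Algebra k C] [IsScalarTower k C R] [Algebra.EssFiniteType C R]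
    {D : n → Derivation k R R} {x b : n → R} (hD : IsCoordinateSystem D x) {s : Set n}
    (hC : (IsScalarTower.toAlgHom k C R).range = Algebra.adjoin k (b '' sᶜ))
    {Q : Ideal R} [Q.IsPrime] (hdet : (jacobianMatrix D b).det ∉ Q)
    (hQ : ∀ i ∈ s, ∀ q ∈ Q, (jacobianMatrix D (Function.update b i q)).det ∈ Q) :
    Q ∈ ((Q.comap (algebraMap C R)).map (algebraMap C R)).minimalPrimes := by
  have eq_zero_of_mem (i : s) (c : C) : jacobianDerivation D b i (algebraMap C R c) = 0 := by
    have hc : algebraMap C R c ∈ Algebra.adjoin k (b '' sᶜ) := hC ▸ ⟨c, rfl⟩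
    have h0 : Set.EqOn (jacobianDerivation D b i) (0 : Derivation k R R) (b '' sᶜ) := by
      rintro _ ⟨j, hj, rfl⟩
      rw [jacobianDerivation_apply_self, Derivation.zero_apply, Pi.single_eq_of_ne]
      rintro rfl
      exact hj i.2
    exact Derivation.eqOn_adjoin h0 hc
  refine mem_minimalPrimes_map_comap_of_derivations (σ := s)
    (δ := fun i => derivationOver (jacobianDerivation D b i) (eq_zero_of_mem i))
    (x := fun i => b i) (fun i j => ?_) (fun r => ?_) hdet fun i q hq => ?_
  · refine (jacobianDerivation_apply_self D b i j).trans ?_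
    simp only [Pi.single_apply, Subtype.ext_iff]
  · let d := (KaehlerDifferential.D C R).restrictScalars k
    change (jacobianMatrix D b).det • d r ∈ _
    rw [det_jacobianMatrix_smul_derivation hD]
    refine Submodule.sum_mem _ fun i _ => Submodule.smul_mem _ _ ?_
    by_cases hi : i ∈ s
    · exact Submodule.subset_span ⟨⟨i, hi⟩, rfl⟩
    · obtain ⟨c, hc⟩ : b i ∈ (IsScalarTower.toAlgHom k C R).range :=
        hC ▸ Algebra.subset_adjoin ⟨i, hi, rfl⟩
      have : d (b i) = 0 := hc ▸ (KaehlerDifferential.D C R).map_algebraMap c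
      exact this ▸ Submodule.zero_mem _
  · have := hQ i i.2 q hq
    rwa [← jacobianDerivation_apply] at this

/-- The bracket `{f, g} = Jac(f, g, v_1, …, v_m)`, for which the `v_i` are Casimirs. -/
def jacobianBracket {m : ℕ} (D : Fin (m + 2) → Derivation k R R) (v : Fin m → R) (f g : R) : R :=
  (jacobianMatrix D (Fin.cons f (Fin.cons g v))).det

theorem jacobianBracket_swap {m : ℕ} (D : Fin (m + 2) → Derivation k R R) (v : Fin m → R)
    (f g : R) : jacobianBracket D v f g = -jacobianBracket D v g f := by
  have hcons : (Fin.cons f (Fin.cons g v) : Fin (m + 2) → R) =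
      (Fin.cons g (Fin.cons f v) : Fin (m + 2) → R) ∘ Equiv.swap 0 1 := by
    refine funext (Fin.cases (by simp) (Fin.cases (by simp) fun i => ?_))
    simp [Equiv.swap_apply_of_ne_of_ne (Fin.succ_ne_zero _) (Fin.succ_succ_ne_one i)]
  have := Matrix.det_permute (Equiv.swap 0 1) (jacobianMatrix D (Fin.cons g (Fin.cons f v)))
  rw [Equiv.Perm.sign_swap Fin.zero_ne_one, Units.val_neg, Units.val_one, Int.cast_neg,
    Int.cast_one, neg_one_mul] at this
  rw [jacobianBracket, hcons]
  exact this

theorem mem_minimalPrimes_map_comap_of_jacobianBracket {m : ℕ} {C : Type*} [CommRing C]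
    [Algebra C R] [Algebra ℚ C] [Algebra k C] [IsScalarTower k C R] [Algebra.EssFiniteType C R]
    {D : Fin (m + 2) → Derivation k R R} {x : Fin (m + 2) → R} (hD : IsCoordinateSystem D x)
    {v : Fin m → R} (hC : (IsScalarTower.toAlgHom k C R).range = Algebra.adjoin k (Set.range v))
    {Q : Ideal R} [Q.IsPrime] (hQ : ∀ q ∈ Q, ∀ r, jacobianBracket D v q r ∈ Q) {f g : R}
    (hfg : jacobianBracket D v f g ∉ Q) :
    Q ∈ ((Q.comap (algebraMap C R)).map (algebraMap C R)).minimalPrimes := by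
  have himage : (Fin.cons f (Fin.cons g v) : Fin (m + 2) → R) '' {0, 1}ᶜ = Set.range v := by
    ext r
    simp [Fin.exists_fin_succ, Fin.succ_succ_ne_one]
  refine mem_minimalPrimes_map_comap_of_jacobian (s := {0, 1}) hD (himage ▸ hC) hfg ?_
  rintro i (rfl | rfl) q hq
  · rw [Fin.update_cons_zero]
    exact hQ q hq g
  · rw [← Fin.succ_zero_eq_one, ← Fin.cons_update, Fin.update_cons_zero]
    have := Q.neg_mem (hQ q hq f)
    rwa [← jacobianBracket_swap] at this

end Jacobian

section Restriction

variable {k B : Type*} [CommRing k] [CommRing B] [Algebra k B]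

theorem derivation_mem_adjoin {d : Derivation k B B} {S : Set B}
    (hd : ∀ a ∈ S, d a ∈ Algebra.adjoin k S) {a : B} (ha : a ∈ Algebra.adjoin k S) :
    d a ∈ Algebra.adjoin k S := by
  induction ha using Algebra.adjoin_induction with
  | mem a ha => exact hd a ha
  | algebraMap c => simp
  | add a b _ _ ha hb =>
    rw [map_add]
    exact add_mem ha hb
  | mul a b ha hb hda hdb =>
    rw [Derivation.leibniz]
    exact add_mem (mul_mem ha hdb) (mul_mem hb hda)

/-- The restriction of a derivation to a subalgebra that it maps into itself. -/
def derivationRestrict (d : Derivation k B B) (S : Subalgebra k B) (hd : ∀ a ∈ S, d a ∈ S) :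
    Derivation k S S :=
  Derivation.mk'
    { toFun := fun a => ⟨d a, hd a a.2⟩
      map_add' := fun a b => Subtype.ext (map_add d (a : B) b)
      map_smul' := fun c a => Subtype.ext (d.map_smul c (a : B)) }
    fun a b => Subtype.ext (d.leibniz (a : B) b)

theorem coe_det_jacobianMatrix_derivationRestrict {n : Type*} [Fintype n] [DecidableEq n]
    (D : n → Derivation k B B) (S : Subalgebra k B) (hD : ∀ j, ∀ a ∈ S, D j a ∈ S) (b : n → S) :
    ((jacobianMatrix (fun j => derivationRestrict (D j) S (hD j)) b).det : B) =
      (jacobianMatrix D (S.val ∘ b)).det :=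
  RingHom.map_det S.val.toRingHom _

theorem adjoin_range_comp_X {σ : Type*} (φ : MvPolynomial σ k →ₐ[k] B) :
    Algebra.adjoin k (Set.range (φ ∘ X)) = φ.range := by
  rw [Algebra.adjoin_range_eq_range_aeval, ← aeval_unique]

end Restriction

section Agam

variable {m : ℕ} {D : Fin (m + 2) → Derivation ℂ (FB m) (FB m)} {s t : Fin m → PA m}
  {γ : Fin m → Bool × Bool}

theorem algebraMap_mem_Agam (s t : Fin m → PA m) (γ : Fin m → Bool × Bool) (p : PA m) :
    algebraMap (PA m) (FB m) p ∈ Agam s t γ :=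
  Algebra.subset_adjoin (Or.inl ⟨p, rfl⟩)

theorem IsPartialDerivs.apply_mem_Agam (hD : IsPartialDerivs D) (s t : Fin m → PA m)
    (γ : Fin m → Bool × Bool) (j : Fin (m + 2)) : ∀ a ∈ Agam s t γ, D j a ∈ Agam s t γ := by
  refine fun a ha => derivation_mem_adjoin ?_ ha
  rintro _ (⟨p, rfl⟩ | ⟨p, hp, rfl⟩)
  · rw [hD]
    exact algebraMap_mem_Agam s t γ _
  · have hinv : (algebraMap (PA m) (FB m) p)⁻¹ ∈ Agam s t γ :=
      Algebra.subset_adjoin (Or.inr ⟨p, hp, rfl⟩)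
    rw [Derivation.leibniz_inv, hD, smul_eq_mul]
    exact mul_mem (neg_mem (pow_mem hinv 2)) (algebraMap_mem_Agam s t γ _)

/-- The partial derivatives as derivations of `A_γ`. -/
def partialAgam (hD : IsPartialDerivs D) (s t : Fin m → PA m) (γ : Fin m → Bool × Bool)
    (j : Fin (m + 2)) : Derivation ℂ (Agam s t γ) (Agam s t γ) :=
  derivationRestrict (D j) (Agam s t γ) (hD.apply_mem_Agam s t γ j)

/-- The inclusion of the polynomial algebra `A` in `A_γ`. -/
def toAgam (s t : Fin m → PA m) (γ : Fin m → Bool × Bool) : PA m →ₐ[ℂ] Agam s t γ :=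
  (IsScalarTower.toAlgHom ℂ (PA m) (FB m)).codRestrict _ (algebraMap_mem_Agam s t γ)

/-- The inverses in `A_γ` of the elements of `S_γ`. -/
def invSgam (s t : Fin m → PA m) (γ : Fin m → Bool × Bool) : Set (Agam s t γ) :=
  {a | (a : FB m) ∈ (fun p => (algebraMap (PA m) (FB m) p)⁻¹) '' Sgam s t γ}

theorem adjoin_toAgam_X_union_invSgam (s t : Fin m → PA m) (γ : Fin m → Bool × Bool) :
    Algebra.adjoin ℂ (Set.range (toAgam s t γ ∘ X) ∪ invSgam s t γ) = ⊤ := by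
  have hrange : Set.range (toAgam s t γ) =
      Subtype.val ⁻¹' Set.range (algebraMap (PA m) (FB m)) := by
    ext a
    exact exists_congr fun p => Subtype.ext_iff
  rw [Algebra.adjoin_union, adjoin_range_comp_X, ← Algebra.adjoin_eq (toAgam s t γ).range,
    ← Algebra.adjoin_union, AlgHom.coe_range, hrange]
  exact Algebra.adjoin_adjoin_coe_preimage

theorem finite_Sgam (s t : Fin m → PA m) (γ : Fin m → Bool × Bool) : (Sgam s t γ).Finite := by
  refine ((Set.finite_range s).union (Set.finite_range t)).subset ?_
  rintro _ (⟨i, -, rfl⟩ | ⟨i, -, rfl⟩)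
  · exact Or.inl ⟨i, rfl⟩
  · exact Or.inr ⟨i, rfl⟩

theorem finiteType_Agam (s t : Fin m → PA m) (γ : Fin m → Bool × Bool) :
    Algebra.FiniteType ℂ (Agam s t γ) := by
  have hfin : (invSgam s t γ).Finite :=
    ((finite_Sgam s t γ).image _).preimage Subtype.val_injective.injOn
  exact ⟨Subalgebra.fg_def.mpr ⟨_, (Set.finite_range _).union hfin,
    adjoin_toAgam_X_union_invSgam s t γ⟩⟩

theorem isCoordinateSystem_partialAgam (hD : IsPartialDerivs D) (hs : ∀ i, s i ≠ 0)
    (ht : ∀ i, t i ≠ 0) : IsCoordinateSystem (partialAgam hD s t γ) (toAgam s t γ ∘ X) := by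
  refine isCoordinateSystem_of_adjoin_eq_top (fun i j => Subtype.ext ?_) (fun a ha => ?_)
    (adjoin_toAgam_X_union_invSgam s t γ)
  · refine (hD i (X j)).trans ?_
    rw [pderiv_X]
    rcases eq_or_ne j i with rfl | hj
    · simp
    · simp [hj]
  · obtain ⟨p, hp, hpa⟩ := ha
    have hp0 : p ≠ 0 := by
      rcases hp with ⟨i, -, rfl⟩ | ⟨i, -, rfl⟩
      · exact hs i
      · exact ht i
    refine ⟨toAgam s t γ p, ?_, Subtype.ext ?_⟩
    · rw [adjoin_range_comp_X]
      exact ⟨p, rfl⟩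
    · change (a : FB m) * algebraMap (PA m) (FB m) p = 1
      rw [← hpa]
      exact inv_mul_cancel₀ ((FaithfulSMul.algebraMap_eq_zero_iff _ _).not.mpr hp0)

/-- The generator `v_i` of `C_γ` as an element of `A_γ`. -/
def vAgam (hsub : Cgam s t γ ≤ Agam s t γ) (i : Fin m) : Agam s t γ :=
  ⟨vgam s t γ i, hsub (Algebra.subset_adjoin ⟨i, rfl⟩)⟩

/-- The factor `c ∈ A` with `{f, g} = c · Jac(f, g, v_1, …, v_m)`. -/
def bracketFactor (s t : Fin m → PA m) (γ : Fin m → Bool × Bool) : PA m :=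
  ∏ i, if (γ i).2 then t i ^ 2 else -s i ^ 2

theorem sq_mul_derivation_div (d : Derivation ℂ (FB m) (FB m)) {i : Fin m} (hs : s i ≠ 0) :
    algebraMap (PA m) (FB m) (t i ^ 2) *
        d (algebraMap (PA m) (FB m) (s i) / algebraMap (PA m) (FB m) (t i)) =
      algebraMap (PA m) (FB m) (if (γ i).2 then t i ^ 2 else -s i ^ 2) * d (vgam s t γ i) := by
  have hs' : algebraMap (PA m) (FB m) (s i) ≠ 0 :=
    (FaithfulSMul.algebraMap_eq_zero_iff _ _).not.mpr hs
  unfold vgam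
  split_ifs
  · rfl
  · rw [← inv_div (algebraMap (PA m) (FB m) (s i)), Derivation.leibniz_inv, smul_eq_mul, inv_div,
      map_neg, map_pow, map_pow]
    field_simp

theorem brB_eq_bracketFactor_mul_jacobianBracket (hs : ∀ i, s i ≠ 0) (f g : FB m) :
    brB D s t f g = algebraMap (PA m) (FB m) (bracketFactor s t γ) *
      jacobianBracket D (vgam s t γ) f g := by
  have := prod_mul_det_jacobianMatrix_congr (D := D)
    (b := Fin.cons f (Fin.cons g fun i =>
      algebraMap (PA m) (FB m) (s i) / algebraMap (PA m) (FB m) (t i)))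
    (b' := Fin.cons f (Fin.cons g (vgam s t γ)))
    (c := Fin.cons 1 (Fin.cons 1 fun i => algebraMap (PA m) (FB m) (t i ^ 2)))
    (c' := Fin.cons 1 (Fin.cons 1 fun i =>
      algebraMap (PA m) (FB m) (if (γ i).2 then t i ^ 2 else -s i ^ 2)))
    (Fin.cases (fun _ => rfl) (Fin.cases (fun _ => rfl) fun i j =>
      sq_mul_derivation_div (D j) (hs i)))
  simp only [Fin.prod_cons, one_mul, ← map_prod, Finset.prod_pow] at this
  exact this

theorem exists_mem_brB_eq_iff (hD : IsPartialDerivs D) (hs : ∀ i, s i ≠ 0)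
    (hsub : Cgam s t γ ≤ Agam s t γ) {Q : Ideal (Agam s t γ)} (f g : Agam s t γ) :
    (∃ w ∈ Q, brB D s t (f : FB m) (g : FB m) = (w : FB m)) ↔
      toAgam s t γ (bracketFactor s t γ) *
        jacobianBracket (partialAgam hD s t γ) (vAgam hsub) f g ∈ Q := by
  have hcons : (Agam s t γ).val ∘ (Fin.cons f (Fin.cons g (vAgam hsub)) : Fin (m + 2) → _) =
      Fin.cons (f : FB m) (Fin.cons (g : FB m) (vgam s t γ)) := by
    rw [Fin.comp_cons, Fin.comp_cons]
    rfl
  have hcoe : brB D s t f g = ((toAgam s t γ (bracketFactor s t γ) *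
      jacobianBracket (partialAgam hD s t γ) (vAgam hsub) f g : Agam s t γ) : FB m) := by
    rw [brB_eq_bracketFactor_mul_jacobianBracket hs, jacobianBracket, ← hcons,
      ← coe_det_jacobianMatrix_derivationRestrict D _ (hD.apply_mem_Agam s t γ)]
    rfl
  rw [hcoe]
  exact ⟨fun ⟨w, hw, h⟩ => Subtype.ext h ▸ hw, fun h => ⟨_, h, rfl⟩⟩

theorem range_inclusion_Cgam (hsub : Cgam s t γ ≤ Agam s t γ) :
    (Subalgebra.inclusion hsub).range = Algebra.adjoin ℂ (Set.range (vAgam hsub)) := by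
  refine Subalgebra.map_injective (f := (Agam s t γ).val) Subtype.val_injective ?_
  rw [AlgHom.map_adjoin, ← Set.range_comp, ← AlgHom.range_comp, Subalgebra.val_comp_inclusion,
    Subalgebra.range_val]
  rfl

end Agam

theorem statement_10_general {m : ℕ}
    (D : Fin (m + 2) → Derivation ℂ (FB m) (FB m)) (hD : IsPartialDerivs D)
    (s t : Fin m → PA m) (hs : ∀ i, s i ≠ 0) (ht : ∀ i, t i ≠ 0)
    (γ : Fin m → Bool × Bool) (hsub : Cgam s t γ ≤ Agam s t γ)
    (Q : Ideal (Agam s t γ)) (hQprime : Q.IsPrime)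
    (hQpoisson : ∀ q ∈ Q, ∀ r : Agam s t γ,
      ∃ w ∈ Q, brB D s t (q : FB m) (r : FB m) = (w : FB m))
    (hQproper : ¬ ∀ f g : Agam s t γ,
      ∃ w ∈ Q, brB D s t (f : FB m) (g : FB m) = (w : FB m)) :
    Q ∈ (Ideal.map (Subalgebra.inclusion hsub)
      (Ideal.comap (Subalgebra.inclusion hsub) Q)).minimalPrimes := by
  simp only [exists_mem_brB_eq_iff hD hs hsub] at hQpoisson hQproper
  push Not at hQproper
  obtain ⟨f, g, hfg⟩ := hQproper
  have hfactor : toAgam s t γ (bracketFactor s t γ) ∉ Q := mt (Q.mul_mem_right _) hfg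
  let _ : Algebra (Cgam s t γ) (Agam s t γ) := (Subalgebra.inclusion hsub).toAlgebra
  let _ : Algebra ℚ (Cgam s t γ) := Algebra.compHom _ (algebraMap ℚ ℂ)
  have : Algebra.FiniteType ℂ (Agam s t γ) := finiteType_Agam s t γ
  have : Algebra.EssFiniteType (Cgam s t γ) (Agam s t γ) := .of_comp ℂ _ _
  exact mem_minimalPrimes_map_comap_of_jacobianBracket (isCoordinateSystem_partialAgam hD hs ht)
    (range_inclusion_Cgam hsub)
    (fun q hq r => (hQprime.mem_or_mem (hQpoisson q hq r)).resolve_left hfactor)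
    (mt (Q.mul_mem_left _) hfg)

theorem statement_10 {m : ℕ} (hm : 1 ≤ m)
    (D : Fin (m + 2) → Derivation ℂ (FB m) (FB m)) (hD : IsPartialDerivs D)
    (s t : Fin m → PA m)
    (ht : ∀ i, t i ≠ 0)
    (hcop : ∀ i, ∀ d : PA m, d ∣ s i → d ∣ t i → IsUnit d)
    (hind : AlgebraicIndependent ℂ
      (fun i => algebraMap (PA m) (FB m) (s i) / algebraMap (PA m) (FB m) (t i)))
    (γ : Fin m → Bool × Bool) (hdense : ∀ i, γ i ≠ (false, false))
    (hsub : Cgam s t γ ≤ Agam s t γ)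
    (Q : Ideal (Agam s t γ))
    (hQprime : Q.IsPrime) (hQne : Q ≠ ⊥)
    (hQpoisson : ∀ q ∈ Q, ∀ r : Agam s t γ,
      ∃ w ∈ Q, brB D s t (q : FB m) (r : FB m) = (w : FB m))
    (hQproper : ¬ ∀ f g : Agam s t γ,
      ∃ w ∈ Q, brB D s t (f : FB m) (g : FB m) = (w : FB m)) :
    Q ∈ (Ideal.map (Subalgebra.inclusion hsub)
      (Ideal.comap (Subalgebra.inclusion hsub) Q)).minimalPrimes := by
  refine statement_10_general D hD s t (fun i hi => hind.ne_zero i ?_) ht γ hsub Q hQprime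
    hQpoisson hQproper
  simp [hi]

end
end

section
/- The Poisson algebra A satisfies the Poisson Dixmier-Moeglin equivalence: for every Poisson prime ideal P of A, the following are equivalent: (i) P is locally closed, i.e. the intersection of all Poisson prime ideals of A strictly containing P strictly contains P; (ii) P is Poisson primitive; (iii) P is rational, i.e. the Poisson centre of the quotient field of A/P is ℂ — explicitly, whenever c, d ∈ A with d ∉ P satisfy d·{c,r} − c·{d,r} ∈ P for all r ∈ A, there exists α ∈ ℂ with c − αd ∈ P. -/
/- STATEMENT 18: A satisfies the Poisson Dixmier–Moeglin equivalence: for every Poisson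
prime ideal P of A, P is locally closed ↔ P is Poisson primitive ↔ P is rational. -/

noncomputable section
open MvPolynomial

/-- The rows of the matrix computing the Poisson bracket on `A`: ∇f, ∇g and, for
each `i`, `t_i²∇(s_i/t_i) = t_i∇s_i − s_i∇t_i`. -/
def pbrRows {m : ℕ} (s t : Fin m → PA m) (f g : PA m) :
    Fin (m + 2) → Fin (m + 2) → PA m :=
  Fin.cons (fun j => pderiv j f)
    (Fin.cons (fun j => pderiv j g)
      (fun k => fun j => t k * pderiv j (s k) - s k * pderiv j (t k)))

/-- The Poisson bracket `{f,g} = (t_1⋯t_m)²·Jac(f,g,s_1/t_1,…,s_m/t_m)` restricted to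
the polynomial algebra `A`. -/
def pbr {m : ℕ} (s t : Fin m → PA m) (f g : PA m) : PA m :=
  Matrix.det (Matrix.of (pbrRows s t f g))

/-! In characteristic zero a minimal prime over a Poisson ideal is Poisson: exponentiating a
derivation to a Taylor homomorphism exhibits the largest stable ideal inside a prime as the kernel
of a map to a domain. With the Nullstellensatz this makes locally closed Poisson primes primitive.
If `P` is the largest Poisson ideal inside a maximal ideal `M`, the denominators of a Casimir of the
fraction field of `A / P` form a Poisson ideal not inside `P`, so every Casimir is regular at `M`.
If a Casimir with value `α` at `M` were not `α`, the inverse of its difference with `α` would be a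
Casimir with a pole at `M`; thus `P` is rational.

If `P` is rational, each Casimir `sₖ / tₖ` is constant or infinite along `V(P)`, so modulo `P` the
row `tₖ² ∇(sₖ / tₖ)` is a multiple of the gradient of an element of `P`. Let `Q ≥ P` be a Poisson
prime with `{f, g} ∉ Q`. For `u ∈ Q`, Cramer's rule writes `{f, g} ∇u` as a combination of `∇f`,
`∇g`, whose coefficients `{u, g}`, `{f, u}` lie in `Q`, and of the rows. Hence the differentials of
elements of `P` span the conormal space of `Q` at its generic point, and `Q = P` by Nakayama's
lemma. So either some `{f, g} ∉ P` lies in all Poisson primes strictly above `P`, or all brackets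
vanish modulo `P`, and then rationality makes `P` maximal. -/

section Taylor

open Finset Nat PowerSeries

variable {S A : Type*} [CommSemiring S] [CommRing A] [Algebra S A]

theorem derivation_iterate_mul (D : Derivation S A A) (n : ℕ) (a b : A) :
    D^[n] (a * b) = ∑ ij ∈ antidiagonal n, n.choose ij.1 • (D^[ij.1] a * D^[ij.2] b) := by
  induction n with
  | zero => simp
  | succ n ih =>
    rw [sum_antidiagonal_choose_succ_nsmul (fun i j => D^[i] a * D^[j] b) n]
    simp only [Function.iterate_succ_apply', ih, map_sum, map_nsmul, D.leibniz, smul_eq_mul,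
      smul_add, sum_add_distrib]
    congr 1
    refine sum_congr rfl fun ij hij => ?_
    rw [n.choose_symm_of_eq_add (mem_antidiagonal.1 hij).symm, mul_comm]

/-- The Taylor homomorphism `a ↦ ∑ₙ (Dⁿ a / n!) Tⁿ` of a derivation `D`; pulling back primes along
it shows that the largest `D`-stable ideal inside a prime ideal is prime. -/
def taylorHom [Algebra ℚ A] (D : Derivation S A A) : A →+* A⟦X⟧ where
  toFun a := PowerSeries.mk fun n => (n ! : ℚ)⁻¹ • D^[n] a
  map_zero' := by ext n; simp
  map_one' := by
    ext (_ | n)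
    · simp
    · simp [Function.iterate_succ_apply, PowerSeries.coeff_one]
  map_add' a b := by ext n; simp
  map_mul' a b := by
    ext n
    simp only [coeff_mk, PowerSeries.coeff_mul, derivation_iterate_mul, smul_sum]
    refine sum_congr rfl fun ij hij => ?_
    obtain ⟨i, j⟩ := ij
    obtain rfl : i + j = n := mem_antidiagonal.1 hij
    rw [smul_mul_smul_comm, ← Nat.cast_smul_eq_nsmul ℚ, smul_smul, Nat.cast_add_choose]
    congr 1
    field_simp

theorem mem_ker_map_comp_taylorHom [Algebra ℚ A] {D : Derivation S A A} {p : Ideal A} {a : A} :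
    a ∈ RingHom.ker ((PowerSeries.map (Ideal.Quotient.mk p)).comp (taylorHom D)) ↔
      ∀ n, D^[n] a ∈ p := by
  have smul_mem_iff (n : ℕ) (b : A) : (n ! : ℚ)⁻¹ • b ∈ p ↔ b ∈ p := by
    have isUnit_inv : IsUnit (n ! : ℚ)⁻¹ := IsUnit.mk0 _ (by positivity)
    rw [Algebra.smul_def, Ideal.unit_mul_mem_iff_mem _ (isUnit_inv.map _)]
  rw [RingHom.mem_ker, PowerSeries.ext_iff]
  simp [taylorHom, Ideal.Quotient.eq_zero_iff_mem, smul_mem_iff]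

theorem derivation_mem_of_mem_minimalPrimes [Algebra ℚ A] {D : Derivation S A A} {J p : Ideal A}
    (hJ : ∀ u ∈ J, D u ∈ J) (hp : p ∈ J.minimalPrimes) {u : A} (hu : u ∈ p) : D u ∈ p := by
  have : p.IsPrime := hp.1.1
  let core := RingHom.ker ((PowerSeries.map (Ideal.Quotient.mk p)).comp (taylorHom D))
  have hcore : p ≤ core := by
    refine hp.2 ⟨RingHom.ker_isPrime _, fun a ha => mem_ker_map_comp_taylorHom.2 fun n => ?_⟩
      fun a ha => mem_ker_map_comp_taylorHom.1 ha 0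
    exact hp.1.2 (Function.Iterate.rec (· ∈ J) ha hJ n)
  exact mem_ker_map_comp_taylorHom.1 (hcore hu) 1

end Taylor

section DifferentialIdeals

variable {ι K A : Type*} [CommRing A]

section Defs

variable [CommSemiring K] [Algebra K A] (D : ι → Derivation K A A)

/-- Ideals stable under every member of a family of derivations. For the Hamiltonian derivations
`D r = {·, r}` of a Poisson bracket these are the Poisson ideals. -/
def IsDiffIdeal (I : Ideal A) : Prop :=
  ∀ u ∈ I, ∀ i, D i u ∈ I

/-- A prime ideal is locally closed in the space of prime `D`-ideals if the `D`-primes strictly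
above it have a strictly larger intersection (which is `⊤` if there are none). -/
def IsDiffLocallyClosed (P : Ideal A) : Prop :=
  P < sInf {Q : Ideal A | Q.IsPrime ∧ IsDiffIdeal D Q ∧ P < Q}

/-- An ideal is `D`-primitive if it contains every `D`-ideal inside some maximal ideal above it.
For a `D`-ideal `P` this says that `P` is the largest `D`-ideal inside a maximal ideal. -/
def IsDiffPrimitive (P : Ideal A) : Prop :=
  ∃ M : Ideal A, M.IsMaximal ∧ P ≤ M ∧ ∀ J : Ideal A, IsDiffIdeal D J → J ≤ M → J ≤ P

/-- The fraction `c / d` of `A ⧸ P` is killed by all the derivations `D i`; the quotient rule is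
cleared of denominators, so that no induced derivation on the fraction field is needed. -/
def IsConstantFraction (P : Ideal A) (c d : A) : Prop :=
  ∀ i, d * D i c - c * D i d ∈ P

/-- A prime ideal `P` is `D`-rational if the constants of the fraction field of `A ⧸ P` are
scalars. -/
def IsDiffRational (P : Ideal A) : Prop :=
  ∀ c d : A, d ∉ P → IsConstantFraction D P c d → ∃ α : K, c - algebraMap K A α * d ∈ P

variable {D} {I J P M : Ideal A} {c d : A}

theorem IsDiffIdeal.sup (hI : IsDiffIdeal D I) (hJ : IsDiffIdeal D J) :
    IsDiffIdeal D (I ⊔ J) := by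
  intro u hu i
  obtain ⟨a, ha, b, hb, rfl⟩ := Submodule.mem_sup.1 hu
  rw [map_add]
  exact add_mem (Ideal.mem_sup_left (hI a ha i)) (Ideal.mem_sup_right (hJ b hb i))

theorem IsDiffIdeal.of_mem_minimalPrimes [Algebra ℚ A] (hJ : IsDiffIdeal D J)
    (hP : P ∈ J.minimalPrimes) : IsDiffIdeal D P :=
  fun _ hu i => derivation_mem_of_mem_minimalPrimes (fun v hv => hJ v hv i) hP hu

theorem IsDiffLocallyClosed.isDiffPrimitive [Algebra ℚ A] [IsJacobsonRing A]
    (hP : P.IsPrime) (hPD : IsDiffIdeal D P) (h : IsDiffLocallyClosed D P) :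
    IsDiffPrimitive D P := by
  obtain ⟨f, hf, hfP⟩ := SetLike.exists_of_lt h
  obtain ⟨M, hPM, hM, hfM⟩ : ∃ M : Ideal A, P ≤ M ∧ M.IsMaximal ∧ f ∉ M := by
    by_contra! hall
    rw [← isJacobsonRing_iff_prime_eq.1 ‹_› P hP] at hfP
    exact hfP (Ideal.mem_sInf.2 fun {M} hM => hall M hM.1 hM.2)
  refine ⟨M, hM, hPM, fun J hJ hJM => ?_⟩
  have : M.IsPrime := hM.isPrime
  obtain ⟨q, hq, hqM⟩ := Ideal.exists_minimalPrimes_le (sup_le hJM hPM)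
  have hPq : P = q := by
    refine (le_sup_right.trans hq.1.2).eq_of_not_lt fun hlt => hfM (hqM ?_)
    exact Ideal.mem_sInf.1 hf ⟨hq.1.1, (hJ.sup hPD).of_mem_minimalPrimes hq, hlt⟩
  exact (le_sup_left.trans hq.1.2).trans hPq.ge

theorem isDiffLocallyClosed_of_isMaximal (hP : P.IsMaximal) : IsDiffLocallyClosed D P := by
  have : {Q : Ideal A | Q.IsPrime ∧ IsDiffIdeal D Q ∧ P < Q} = ∅ :=
    Set.eq_empty_of_forall_notMem fun Q hQ => hQ.1.ne_top (hP.1.2 Q hQ.2.2)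
  rw [IsDiffLocallyClosed, this, sInf_empty]
  exact hP.ne_top.lt_top

theorem IsConstantFraction.symm (h : IsConstantFraction D P c d) : IsConstantFraction D P d c := by
  intro i
  simpa only [neg_sub] using P.neg_mem (h i)

theorem mem_colon_span_sup_iff {a : A} :
    a ∈ (Ideal.span {d} ⊔ P).colon {c} ↔ ∃ e, a * c - e * d ∈ P := by
  rw [Submodule.mem_colon_singleton, smul_eq_mul, Ideal.mem_span_singleton_sup]
  constructor
  · rintro ⟨e, p, hp, h⟩
    exact ⟨e, by rwa [← h, add_sub_cancel_left]⟩
  · rintro ⟨e, h⟩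
    exact ⟨e, _, h, add_sub_cancel _ _⟩

theorem IsConstantFraction.isDiffIdeal_colon (h : IsConstantFraction D P c d) (hP : P.IsPrime)
    (hPD : IsDiffIdeal D P) (hd : d ∉ P) : IsDiffIdeal D ((Ideal.span {d} ⊔ P).colon {c}) := by
  intro a ha i
  obtain ⟨e, he⟩ := mem_colon_span_sup_iff.1 ha
  refine mem_colon_span_sup_iff.2 ⟨D i e, (hP.mem_or_mem (x := d) ?_).resolve_left hd⟩
  have hDe := hPD _ he i
  simp only [map_sub, D i |>.leibniz, smul_eq_mul] at hDe
  have key := P.sub_mem (P.sub_mem (P.mul_mem_left d hDe) (P.mul_mem_left a (h i)))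
    (P.mul_mem_left (D i d) he)
  convert key using 1
  ring

/-- A constant of the fraction field of `A ⧸ P` is regular at a maximal ideal whose largest
`D`-ideal is `P`: its ideal of denominators is a `D`-ideal not contained in `P`. -/
theorem IsConstantFraction.exists_denominator_notMem (h : IsConstantFraction D P c d)
    (hP : P.IsPrime) (hPD : IsDiffIdeal D P) (hd : d ∉ P)
    (hM : ∀ J : Ideal A, IsDiffIdeal D J → J ≤ M → J ≤ P) :
    ∃ r ∉ M, ∃ e, r * c - e * d ∈ P := by
  by_contra! hden
  refine hd (hM _ (h.isDiffIdeal_colon hP hPD hd) (fun r hr => ?_)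
    (mem_colon_span_sup_iff.2 ⟨c, by simp [mul_comm]⟩))
  by_contra hrM
  obtain ⟨e, he⟩ := mem_colon_span_sup_iff.1 hr
  exact hden r hrM e he

end Defs

section Field

variable [Field K] [Algebra K A] {D : ι → Derivation K A A} {P : Ideal A} {c d : A}

theorem exists_sub_algebraMap_mul_mem [IsAlgClosed K] [Algebra.FiniteType K A] {M : Ideal A}
    (hM : M.IsMaximal) (e : A) {r : A} (hr : r ∉ M) : ∃ α : K, e - algebraMap K A α * r ∈ M := by
  let : Field (A ⧸ M) := Ideal.Quotient.field M
  have : Module.Finite K (A ⧸ M) := finite_of_finite_type_of_isJacobsonRing K (A ⧸ M)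
  have hr' : Ideal.Quotient.mk M r ≠ 0 := mt Ideal.Quotient.eq_zero_iff_mem.1 hr
  obtain ⟨α, hα⟩ := (IsAlgClosed.algebraMap_bijective_of_isIntegral (k := K)).2
    (Ideal.Quotient.mk M e / Ideal.Quotient.mk M r)
  refine ⟨α, Ideal.Quotient.eq.1 ?_⟩
  rw [map_mul, Ideal.Quotient.mk_algebraMap, hα, div_mul_cancel₀ _ hr']

theorem IsConstantFraction.sub_algebraMap_mul (h : IsConstantFraction D P c d) (α : K) :
    IsConstantFraction D P (c - algebraMap K A α * d) d := by
  intro i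
  convert h i using 1
  simp only [map_sub, Derivation.leibniz, Derivation.map_algebraMap, smul_eq_mul]
  ring

theorem IsDiffPrimitive.isDiffRational [IsAlgClosed K] [Algebra.FiniteType K A]
    (hP : P.IsPrime) (hPD : IsDiffIdeal D P) (h : IsDiffPrimitive D P) : IsDiffRational D P := by
  obtain ⟨M, hM, hPM, hcore⟩ := h
  intro c d hd hc
  obtain ⟨r, hr, e, he⟩ := hc.exists_denominator_notMem hP hPD hd hcore
  obtain ⟨α, hα⟩ := exists_sub_algebraMap_mul_mem (K := K) hM e hr
  refine ⟨α, ?_⟩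
  -- `c / d - α` vanishes at `M`, so its inverse cannot be regular there.
  by_contra hne
  obtain ⟨r', hr', e', he'⟩ :=
    (hc.sub_algebraMap_mul α).symm.exists_denominator_notMem hP hPD hne hcore
  have hd_mul : d * (r * r' - (e - algebraMap K A α * r) * e') ∈ P := by
    convert P.add_mem (P.mul_mem_left r he') (P.mul_mem_left e' he) using 1
    ring
  have hrr' := (M.sub_mem_iff_left (M.mul_mem_right _ hα)).1
    (hPM ((hP.mem_or_mem hd_mul).resolve_left hd))
  exact (hM.isPrime.mem_or_mem hrr').elim hr hr'

theorem IsDiffRational.isMaximal (h : IsDiffRational D P) (hP : P.IsPrime)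
    (hD : ∀ i a, D i a ∈ P) : P.IsMaximal := by
  have one_notMem : (1 : A) ∉ P := (P.ne_top_iff_one).1 hP.ne_top
  refine Ideal.isMaximal_iff.2 ⟨one_notMem, fun J x hPJ hxP hxJ => ?_⟩
  obtain ⟨α, hα⟩ := h x 1 one_notMem fun i =>
    P.sub_mem (P.mul_mem_left _ (hD i _)) (P.mul_mem_left _ (hD i _))
  rw [mul_one] at hα
  have hα0 : α ≠ 0 := by
    rintro rfl
    exact hxP (by simpa using hα)
  have hαJ : algebraMap K A α ∈ J := (J.sub_mem_iff_right hxJ).1 (hPJ hα)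
  exact J.eq_top_iff_one.1 (J.eq_top_of_isUnit_mem hαJ ((IsUnit.mk0 α hα0).map _))

end Field

end DifferentialIdeals

section Conormal

open TensorProduct

theorem le_of_forall_exists_mul_mem_sup_sq {R : Type*} [CommRing R] [IsNoetherianRing R]
    {P Q : Ideal R} [P.IsPrime] [Q.IsPrime] (hPQ : P ≤ Q)
    (h : ∀ u ∈ Q, ∃ w ∉ Q, w * u ∈ P ⊔ Q ^ 2) : Q ≤ P := by
  let AQ := Localization.AtPrime Q
  have map_le : Q.map (algebraMap R AQ) ≤ P.map (algebraMap R AQ) := by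
    refine Submodule.le_of_le_smul_of_le_jacobson_bot (IsNoetherian.noetherian _)
      (IsLocalRing.maximalIdeal_le_jacobson _) ?_
    rw [← Localization.AtPrime.map_eq_maximalIdeal, smul_eq_mul, ← sq, ← Ideal.map_pow,
      ← Ideal.map_sup, Ideal.map_le_iff_le_comap]
    intro u hu
    exact (IsLocalization.algebraMap_mem_map_algebraMap_iff Q.primeCompl _ _ _).2 (h u hu)
  intro u hu
  obtain ⟨w, hw, hwu⟩ := (IsLocalization.algebraMap_mem_map_algebraMap_iff Q.primeCompl _ _ _).1
    (map_le (Ideal.mem_map_of_mem _ hu))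
  exact (Ideal.IsPrime.mem_or_mem ‹_› hwu).resolve_left fun hwP => hw (hPQ hwP)

variable {σ K : Type*} [Field K]

theorem derivation_eq_sum_pderiv_smul [Fintype σ] {M : Type*} [AddCommGroup M] [Module K M]
    [Module (MvPolynomial σ K) M] [IsScalarTower K (MvPolynomial σ K) M]
    (D : Derivation K (MvPolynomial σ K) M) (f : MvPolynomial σ K) :
    D f = ∑ j, pderiv j f • D (X j) := by
  classical
  have : D = ∑ j, (LinearMap.toSpanSingleton _ M (D (X j))).compDer (pderiv j) := by
    refine derivation_ext fun i => ?_
    rw [← Derivation.coeFnAddMonoidHom_apply (∑ j, _), map_sum]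
    simp [pderiv_X, Pi.single_apply]
  conv_lhs => rw [this]
  rw [← Derivation.coeFnAddMonoidHom_apply, map_sum]
  simp

theorem residueField_tmul_D_eq_zero_of_pderiv_mem [Finite σ] {Q : Ideal (MvPolynomial σ K)}
    [Q.IsPrime] {u : MvPolynomial σ K} (h : ∀ j, pderiv j u ∈ Q) :
    (1 : Q.ResidueField) ⊗ₜ[Localization.AtPrime Q]
      KaehlerDifferential.D K (Localization.AtPrime Q) (algebraMap _ _ u) = 0 := by
  have := Fintype.ofFinite σ
  let A := MvPolynomial σ K
  let AQ := Localization.AtPrime Q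
  have du_eq_sum : KaehlerDifferential.D K AQ (algebraMap A AQ u) =
      ∑ j, pderiv j u • KaehlerDifferential.D K AQ (algebraMap A AQ (X j)) :=
    derivation_eq_sum_pderiv_smul ((KaehlerDifferential.D K AQ).compAlgebraMap A) u
  rw [du_eq_sum, tmul_sum]
  refine Finset.sum_eq_zero fun j _ => ?_
  rw [← algebraMap_smul AQ, tmul_smul, smul_tmul', algebraMap_smul, Algebra.smul_def, mul_one,
    Ideal.algebraMap_residueField_eq_zero.2 (h j), zero_tmul]

/-- The partial derivatives of `u` at the generic point of `V(Q)` determine the class of `u` in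
`Q / Q²` there: the conormal sequence is left exact because the residue field is smooth over the
perfect field `K`. -/
theorem exists_notMem_mul_mem_sq_of_pderiv_mem [PerfectField K] [Finite σ]
    {Q : Ideal (MvPolynomial σ K)} [Q.IsPrime] {u : MvPolynomial σ K} (hu : u ∈ Q)
    (h : ∀ j, pderiv j u ∈ Q) : ∃ w ∉ Q, w * u ∈ Q ^ 2 := by
  let A := MvPolynomial σ K
  let AQ := Localization.AtPrime Q
  have : Algebra.FormallySmooth K AQ :=
    have := Algebra.FormallySmooth.of_isLocalization (Rₘ := AQ) Q.primeCompl
    .comp K A AQ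
  have : Algebra.EssFiniteType K Q.ResidueField := .comp K A _
  have conormal_injective :=
    (Algebra.FormallySmooth.kerCotangentToTensor_injective_iff (R := K) (P := AQ)
      (A := Q.ResidueField) IsLocalRing.residue_surjective).2 inferInstance
  have ker_eq : RingHom.ker (algebraMap AQ Q.ResidueField) = Q.map (algebraMap A AQ) :=
    IsLocalRing.ker_residue.trans Localization.AtPrime.map_eq_maximalIdeal.symm
  have hu' : algebraMap A AQ u ∈ RingHom.ker (algebraMap AQ Q.ResidueField) :=
    ker_eq ▸ Ideal.mem_map_of_mem _ hu
  have u_mem_sq := (Ideal.toCotangent_eq_zero _ ⟨_, hu'⟩).1 <| conormal_injective <| by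
    rw [KaehlerDifferential.kerCotangentToTensor_toCotangent, map_zero,
      residueField_tmul_D_eq_zero_of_pderiv_mem h]
  simp only [ker_eq] at u_mem_sq
  rwa [← Ideal.map_pow, IsLocalization.algebraMap_mem_map_algebraMap_iff Q.primeCompl] at u_mem_sq

/-- If, at the generic point of `V(Q)`, the conormal space of `Q` is spanned by differentials of
elements of `P ≤ Q`, then `P` and `Q` agree there by Nakayama's lemma. -/
theorem le_of_forall_exists_pderiv_sub_mem [PerfectField K] [Finite σ]
    {P Q : Ideal (MvPolynomial σ K)} [P.IsPrime] [Q.IsPrime] (hPQ : P ≤ Q)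
    {g : MvPolynomial σ K} (hg : g ∉ Q)
    (h : ∀ u ∈ Q, ∃ v ∈ P, ∀ j, g * pderiv j u - pderiv j v ∈ Q) : Q ≤ P := by
  refine le_of_forall_exists_mul_mem_sup_sq hPQ fun u hu => ?_
  obtain ⟨v, hv, huv⟩ := h u hu
  obtain ⟨w, hw, hwuv⟩ := exists_notMem_mul_mem_sq_of_pderiv_mem (u := g * u - v)
    (Q.sub_mem (Q.mul_mem_left g hu) (hPQ hv)) fun j => by
      rw [map_sub, Derivation.leibniz, smul_eq_mul, smul_eq_mul, add_sub_right_comm]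
      exact Q.add_mem (huv j) (Q.mul_mem_right _ hu)
  refine ⟨w * g, ‹Q.IsPrime›.mul_notMem hw hg, ?_⟩
  have hwgu : w * g * u = w * v + w * (g * u - v) := by ring
  rw [hwgu]
  exact add_mem (Ideal.mem_sup_left (P.mul_mem_left w hv)) (Ideal.mem_sup_right hwuv)

end Conormal

section BorderedDet

variable {R : Type*} [CommRing R]

theorem det_smul_eq_sum_det_updateRow_smul {n : Type*} [Fintype n] [DecidableEq n]
    (M : Matrix n n R) (u : n → R) : M.det • u = ∑ i, (M.updateRow i u).det • M i := by
  rw [← M.det_transpose, ← Matrix.mulVec_cramer, Matrix.mulVec_eq_sum]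
  simp only [Matrix.cramer_transpose_apply, op_smul_eq_smul]
  rfl

variable {m : ℕ} (W : Fin m → Fin (m + 2) → R) (v w u : Fin (m + 2) → R)

/-- The determinant with first rows `v`, `w` and remaining rows `W`, as a function of `v`. For
gradients `v` and `w` this is a Jacobian Poisson bracket. -/
def borderedDet : (Fin (m + 2) → R) →ₗ[R] R where
  toFun v := Matrix.det (Matrix.of (Fin.cons v (Fin.cons w W)))
  map_add' := Matrix.detRowAlternating.toMultilinearMap.cons_add (Fin.cons w W)
  map_smul' := Matrix.detRowAlternating.toMultilinearMap.cons_smul (Fin.cons w W)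

theorem borderedDet_row_eq_zero (k : Fin m) : borderedDet W w (W k) = 0 :=
  Matrix.det_zero_of_row_eq (i := 0) (j := k.succ.succ) (Fin.succ_ne_zero _).symm rfl

theorem borderedDet_swap : borderedDet W v w = -borderedDet W w v := by
  have rows_swap : (Fin.cons w (Fin.cons v W) : Fin (m + 2) → Fin (m + 2) → R) =
      Fin.cons v (Fin.cons w W) ∘ Equiv.swap 0 1 := by
    refine funext (Fin.cases ?_ (Fin.cases ?_ fun k => ?_))
    · simp
    · simp
    · have swap_apply : Equiv.swap (0 : Fin (m + 2)) 1 k.succ.succ = k.succ.succ :=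
        Equiv.swap_apply_of_ne_of_ne (Fin.succ_ne_zero _) (Fin.succ_succ_ne_one k)
      simp [swap_apply]
  have det_swap := Matrix.detRowAlternating.map_swap
    (Fin.cons v (Fin.cons w W) : Fin (m + 2) → Fin (m + 2) → R) Fin.zero_ne_one
  rw [← rows_swap] at det_swap
  exact det_swap

theorem exists_borderedDet_smul_eq :
    ∃ c : Fin m → R, borderedDet W w v • u =
      borderedDet W w u • v + borderedDet W u v • w + ∑ k, c k • W k := by
  set M : Matrix (Fin (m + 2)) (Fin (m + 2)) R := Matrix.of (Fin.cons v (Fin.cons w W))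
  refine ⟨fun k => (M.updateRow k.succ.succ u).det, ?_⟩
  have updateRow_zero : M.updateRow 0 u = Matrix.of (Fin.cons u (Fin.cons w W)) :=
    congrArg Matrix.of (Fin.update_cons_zero (α := fun _ => Fin (m + 2) → R) ..)
  have updateRow_one : M.updateRow (Fin.succ 0) u = Matrix.of (Fin.cons v (Fin.cons u W)) := by
    refine congrArg Matrix.of ((Fin.cons_update (α := fun _ => Fin (m + 2) → R) ..).symm.trans ?_)
    rw [Fin.update_cons_zero]
  have cramer := det_smul_eq_sum_det_updateRow_smul M u
  rw [Fin.sum_univ_succ, Fin.sum_univ_succ, updateRow_zero, updateRow_one, ← add_assoc] at cramer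
  exact cramer

end BorderedDet

section JacobianBracket

/-- The gradient of a polynomial, as a vector-valued derivation. -/
def polynomialGradient (K σ : Type*) [CommRing K] :
    Derivation K (MvPolynomial σ K) (σ → MvPolynomial σ K) :=
  .mk' (LinearMap.pi fun j => (pderiv j).toLinearMap) fun f g => funext fun j =>
    (pderiv j).leibniz f g

section Gradient

variable {K σ : Type*} [CommRing K] {P : Ideal (MvPolynomial σ K)} {s t : MvPolynomial σ K}

theorem polynomialGradient_apply (f : MvPolynomial σ K) (j : σ) :
    polynomialGradient K σ f j = pderiv j f :=
  rfl

/-- The vectors that are congruent modulo `P` to the gradient of an element of `P`. They represent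
the image of `P / P²` in the differentials of the polynomial ring restricted to `V(P)`. -/
def conormalImage (P : Ideal (MvPolynomial σ K)) :
    Submodule (MvPolynomial σ K) (σ → MvPolynomial σ K) where
  carrier := {w | ∃ v ∈ P, ∀ j, w j - pderiv j v ∈ P}
  zero_mem' := ⟨0, P.zero_mem, fun j => by simp⟩
  add_mem' := by
    rintro w w' ⟨v, hv, hw⟩ ⟨v', hv', hw'⟩
    refine ⟨v + v', P.add_mem hv hv', fun j => ?_⟩
    rw [map_add, Pi.add_apply, add_sub_add_comm]
    exact P.add_mem (hw j) (hw' j)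
  smul_mem' := by
    rintro c w ⟨v, hv, hw⟩
    refine ⟨c * v, P.mul_mem_left c hv, fun j => ?_⟩
    rw [Derivation.leibniz, Pi.smul_apply, ← sub_sub, ← smul_sub]
    exact P.sub_mem (P.mul_mem_left c (hw j)) (P.mul_mem_right _ hv)

theorem polynomialGradient_mem_conormalImage (hs : s ∈ P) :
    polynomialGradient K σ s ∈ conormalImage P :=
  ⟨s, hs, fun j => by simp [polynomialGradient_apply]⟩

theorem smul_mem_conormalImage (ht : t ∈ P) (w : σ → MvPolynomial σ K) :
    t • w ∈ conormalImage P :=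
  ⟨0, P.zero_mem, fun j => by simpa using P.mul_mem_right (w j) ht⟩

/-- The row `t² ∇(s / t)`, defined without dividing. -/
def quotientRow (s t : MvPolynomial σ K) : σ → MvPolynomial σ K :=
  t • polynomialGradient K σ s - s • polynomialGradient K σ t

theorem quotientRow_swap (s t : MvPolynomial σ K) : quotientRow t s = -quotientRow s t :=
  (neg_sub _ _).symm

theorem quotientRow_sub_C_mul (s t : MvPolynomial σ K) (α : K) :
    quotientRow (s - C α * t) t = quotientRow s t := by
  ext1 j
  simp only [quotientRow, Pi.sub_apply, Pi.smul_apply, polynomialGradient_apply, map_sub,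
    pderiv_C_mul, smul_eq_mul]
  ring

theorem quotientRow_mem_conormalImage_of_mem (hs : s ∈ P) (t : MvPolynomial σ K) :
    quotientRow s t ∈ conormalImage P :=
  sub_mem (Submodule.smul_mem _ t (polynomialGradient_mem_conormalImage hs))
    (smul_mem_conormalImage hs _)

end Gradient

variable {K : Type*} {m : ℕ}

/-- The Hamiltonian derivation `{·, g}` of the bracket `{f, g} = det (∇f, ∇g, W)`. -/
def hamiltonian [CommRing K] (W : Fin m → Fin (m + 2) → MvPolynomial (Fin (m + 2)) K)
    (g : MvPolynomial (Fin (m + 2)) K) :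
    Derivation K (MvPolynomial (Fin (m + 2)) K) (MvPolynomial (Fin (m + 2)) K) :=
  (borderedDet W (polynomialGradient K _ g)).compDer (polynomialGradient K _)

theorem hamiltonian_swap [CommRing K] (W : Fin m → Fin (m + 2) → MvPolynomial (Fin (m + 2)) K)
    (f g : MvPolynomial (Fin (m + 2)) K) : hamiltonian W f g = -hamiltonian W g f :=
  borderedDet_swap W _ _

/-- The Hamiltonian derivation `{·, g}` of `{f, g} = (∏ tₖ)² Jac(f, g, s₁ / t₁, …, sₘ / tₘ)`; the
factor `(∏ tₖ)²` is absorbed into the rows. -/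
abbrev jacobianHamiltonian [CommRing K] (s t : Fin m → MvPolynomial (Fin (m + 2)) K)
    (g : MvPolynomial (Fin (m + 2)) K) :
    Derivation K (MvPolynomial (Fin (m + 2)) K) (MvPolynomial (Fin (m + 2)) K) :=
  hamiltonian (fun k => quotientRow (s k) (t k)) g

theorem isConstantFraction_jacobianHamiltonian [CommRing K]
    (s t : Fin m → MvPolynomial (Fin (m + 2)) K) (P : Ideal (MvPolynomial (Fin (m + 2)) K))
    (k : Fin m) : IsConstantFraction (jacobianHamiltonian s t) P (s k) (t k) := by
  intro g
  have casimir :=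
    borderedDet_row_eq_zero (fun k => quotientRow (s k) (t k)) (polynomialGradient K _ g) k
  rw [quotientRow, map_sub, map_smul, map_smul] at casimir
  exact casimir ▸ P.zero_mem

variable [Field K] {P Q : Ideal (MvPolynomial (Fin (m + 2)) K)}

theorem IsDiffRational.quotientRow_mem_conormalImage
    {s t : Fin m → MvPolynomial (Fin (m + 2)) K}
    (h : IsDiffRational (jacobianHamiltonian s t) P) (k : Fin m) :
    quotientRow (s k) (t k) ∈ conormalImage P := by
  by_cases htk : t k ∈ P
  · rw [quotientRow_swap]
    exact neg_mem (quotientRow_mem_conormalImage_of_mem htk (s k))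
  · obtain ⟨α, hα⟩ := h _ _ htk (isConstantFraction_jacobianHamiltonian s t P k)
    rw [← quotientRow_sub_C_mul _ _ α]
    exact quotientRow_mem_conormalImage_of_mem hα (t k)

/-- Where the bracket is not identically zero, Cramer's rule expresses every differential through
two Hamiltonian values and the rows of `W`; on a Poisson prime `Q` the former vanish. -/
theorem le_of_hamiltonian_notMem [PerfectField K] [P.IsPrime] [Q.IsPrime] (hPQ : P ≤ Q)
    {W : Fin m → Fin (m + 2) → MvPolynomial (Fin (m + 2)) K} (hW : ∀ k, W k ∈ conormalImage P)
    (hQ : IsDiffIdeal (hamiltonian W) Q) {f g : MvPolynomial (Fin (m + 2)) K}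
    (hfg : hamiltonian W g f ∉ Q) : Q ≤ P := by
  refine le_of_forall_exists_pderiv_sub_mem hPQ hfg fun u hu => ?_
  obtain ⟨c, cramer⟩ := exists_borderedDet_smul_eq W (polynomialGradient K _ f)
    (polynomialGradient K _ g) (polynomialGradient K _ u)
  obtain ⟨v, hv, hcW⟩ : ∑ k, c k • W k ∈ conormalImage P :=
    sum_mem fun k _ => Submodule.smul_mem _ _ (hW k)
  refine ⟨v, hv, fun j => ?_⟩
  have cramer_j : hamiltonian W g f * pderiv j u =
      hamiltonian W g u * pderiv j f + hamiltonian W u f * pderiv j g + (∑ k, c k • W k) j :=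
    congrFun cramer j
  have huf : hamiltonian W u f ∈ Q := by
    rw [hamiltonian_swap]
    exact Q.neg_mem (hQ u hu f)
  rw [cramer_j, add_sub_assoc]
  exact Q.add_mem (Q.add_mem (Q.mul_mem_right _ (hQ u hu g)) (Q.mul_mem_right _ huf)) (hPQ (hcW j))

theorem IsDiffRational.isDiffLocallyClosed [PerfectField K]
    {s t : Fin m → MvPolynomial (Fin (m + 2)) K} (hP : P.IsPrime)
    (h : IsDiffRational (jacobianHamiltonian s t) P) :
    IsDiffLocallyClosed (jacobianHamiltonian s t) P := by
  by_cases htriv : ∀ g f, jacobianHamiltonian s t g f ∈ P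
  · exact isDiffLocallyClosed_of_isMaximal (h.isMaximal hP htriv)
  · push Not at htriv
    obtain ⟨g, f, hfg⟩ := htriv
    refine SetLike.lt_iff_le_and_exists.2 ⟨le_sInf fun Q hQ => hQ.2.2.le, _, ?_, hfg⟩
    refine Ideal.mem_sInf.2 fun {Q} ⟨hQ, hQD, hPQ⟩ => ?_
    by_contra hfgQ
    exact hPQ.not_ge (le_of_hamiltonian_notMem hPQ.le h.quotientRow_mem_conormalImage hQD hfgQ)

end JacobianBracket

theorem statement_18_general {K : Type*} [Field K] [IsAlgClosed K] [CharZero K] {m : ℕ}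
    (s t : Fin m → MvPolynomial (Fin (m + 2)) K) (P : Ideal (MvPolynomial (Fin (m + 2)) K))
    (hP : P.IsPrime) (hPD : IsDiffIdeal (jacobianHamiltonian s t) P) :
    (IsDiffLocallyClosed (jacobianHamiltonian s t) P ↔
      IsDiffPrimitive (jacobianHamiltonian s t) P) ∧
    (IsDiffPrimitive (jacobianHamiltonian s t) P ↔ IsDiffRational (jacobianHamiltonian s t) P) :=
  ⟨⟨fun h => h.isDiffPrimitive hP hPD, fun h => (h.isDiffRational hP hPD).isDiffLocallyClosed hP⟩,
    ⟨fun h => h.isDiffRational hP hPD,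
      fun h => (h.isDiffLocallyClosed hP).isDiffPrimitive hP hPD⟩⟩

theorem statement_18 {m : ℕ} (hm : 1 ≤ m)
    (s t : Fin m → PA m)
    (ht : ∀ i, t i ≠ 0)
    (hcop : ∀ i, ∀ d : PA m, d ∣ s i → d ∣ t i → IsUnit d)
    (hind : AlgebraicIndependent ℂ
      (fun i => algebraMap (PA m) (FB m) (s i) / algebraMap (PA m) (FB m) (t i)))
    (P : Ideal (PA m)) (hPprime : P.IsPrime)
    (hPpoisson : ∀ u ∈ P, ∀ r : PA m, pbr s t u r ∈ P) :
    -- (i) locally closed ↔ (ii) Poisson primitive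
    ((P < sInf {Q : Ideal (PA m) |
        Q.IsPrime ∧ (∀ u ∈ Q, ∀ r : PA m, pbr s t u r ∈ Q) ∧ P < Q}) ↔
     (∃ M : Ideal (PA m), M.IsMaximal ∧ P ≤ M ∧
        ∀ J : Ideal (PA m), (∀ u ∈ J, ∀ r : PA m, pbr s t u r ∈ J) → J ≤ M → J ≤ P)) ∧
    -- (ii) Poisson primitive ↔ (iii) rational
    ((∃ M : Ideal (PA m), M.IsMaximal ∧ P ≤ M ∧
        ∀ J : Ideal (PA m), (∀ u ∈ J, ∀ r : PA m, pbr s t u r ∈ J) → J ≤ M → J ≤ P) ↔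
     (∀ c d : PA m, d ∉ P →
        (∀ r : PA m, d * pbr s t c r - c * pbr s t d r ∈ P) →
        ∃ α : ℂ, c - C α * d ∈ P)) :=
  statement_18_general s t P hPprime hPpoisson

end
end
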